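/- arXiv:2504.04619 — 7 statements merged into one kernel-verified Lean document; each statement's English description precedes it below -/
import Mathlib

section
/- Let V be a finite vertex type, G a connected simple graph on V, and w : Sym2 V → ℝ an edge-weight function that is injective on the edge set of G. Let T be a minimum spanning tree of G, i.e., T ≤ G, T is connected and acyclic, and the total weight Σ_{e ∈ edges(T)} w(e) is minimal among all connected acyclic spanning subgraphs of G. Then T is path-max equivalent to G: for all vertices u and v, PathMax_T(u,v) = PathMax_G(u,v), i.e., the minimum over all paths in T from u to v of the maximum edge weight on the path equals the minimum over all paths in G from u to v of the maximum edge weight on the path. -/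
/-- The maximum edge weight on a walk `p` (as the supremum of the weights of
its edges). -/
noncomputable def walkMax {V : Type*} {G : SimpleGraph V} (w : Sym2 V → ℝ)
    {u v : V} (p : G.Walk u v) : ℝ :=
  sSup (w '' {e | e ∈ p.edges})

/-- `pathMax G w u v` is the minimum, over all paths `P` from `u` to `v` in
`G`, of the maximum edge weight on `P`. -/
noncomputable def pathMax {V : Type*} (G : SimpleGraph V) (w : Sym2 V → ℝ)
    (u v : V) : ℝ :=
  sInf {m | ∃ p : G.Walk u v, p.IsPath ∧ m = walkMax w p}

open SimpleGraph in
/-- Exchange step: an edge of the tree path is dominated by an edge of any walk in `G`. -/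
theorem mst_exchange {V : Type*} [Fintype V] (G : SimpleGraph V)
    (w : Sym2 V → ℝ) (hG : G.Connected)
    (T : SimpleGraph V) (hTG : T ≤ G) (hTc : T.Connected) (hTa : T.IsAcyclic)
    (hmin : ∀ T' : SimpleGraph V, T' ≤ G → T'.Connected → T'.IsAcyclic →
      (∑ᶠ e ∈ T.edgeSet, w e) ≤ ∑ᶠ e ∈ T'.edgeSet, w e)
    {u v : V} (p : T.Walk u v) (hp : p.IsPath) (q : G.Walk u v)
    (e : Sym2 V) (he : e ∈ p.edges) : ∃ f ∈ q.edges, w e ≤ w f := by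
  classical
  have heT : e ∈ T.edgeSet := p.edges_subset_edgeSet he
  set F := T.deleteEdges {e} with hF
  have hFT : F ≤ T := T.deleteEdges_le _
  have hnr : ¬ F.Reachable u v := by
    rintro ⟨r⟩
    have h1 : (r.bypass.mapLe hFT).IsPath := (Walk.isPath_mapLe hFT).2 r.bypass_isPath
    have h2 := hTa.path_unique ⟨p, hp⟩ ⟨_, h1⟩
    have h3 : p = r.bypass.mapLe hFT := congrArg Subtype.val h2
    rw [h3, Walk.edges_mapLe_eq_edges] at he
    have h4 := r.bypass.edges_subset_edgeSet he
    simp [hF] at h4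
  obtain ⟨d, hd, hd1, hd2⟩ := q.exists_boundary_dart {z | F.Reachable u z} (Reachable.refl _) hnr
  have hde : d.edge ∈ q.edges := List.mem_map_of_mem hd
  refine ⟨d.edge, hde, ?_⟩
  have hxy : ¬ F.Reachable d.fst d.snd := fun h => hd2 (Reachable.trans hd1 h)
  have hFa : F.IsAcyclic := hTa.anti hFT
  set T' := F ⊔ SimpleGraph.edge d.fst d.snd with hT'
  have hT'a : T'.IsAcyclic := hFa.sup_edge_of_not_reachable hxy
  have hne : d.fst ≠ d.snd := d.adj.ne
  have hT'G : T' ≤ G := by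
    refine sup_le (hFT.trans hTG) ?_
    rw [SimpleGraph.edge_le_iff]
    exact Or.inr d.adj
  have hFE : F.edgeSet = T.edgeSet \ {e} := T.edgeSet_deleteEdges _
  have hE : T'.edgeSet = insert d.edge F.edgeSet := by
    rw [hT', SimpleGraph.edgeSet_sup, SimpleGraph.edge_edgeSet_of_ne hne, Set.union_comm]
    rfl
  have hTE : T.edgeSet = insert e F.edgeSet := by
    rw [hFE, Set.insert_diff_singleton, Set.insert_eq_of_mem heT]
  have hdF : d.edge ∉ F.edgeSet := fun h => hxy (Adj.reachable h)
  have heF : e ∉ F.edgeSet := by simp [hFE]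
  have hfin : F.edgeSet.Finite := Set.toFinite _
  have hcard : T'.edgeSet.ncard = T.edgeSet.ncard := by
    rw [hE, hTE, Set.ncard_insert_of_notMem hdF, Set.ncard_insert_of_notMem heF]
  obtain ⟨S, hS1, hS2, hS3⟩ := hG.exists_isTree_le_of_le_of_isAcyclic hT'G hT'a
  have hSc : S.edgeSet.ncard = T.edgeSet.ncard := by
    have h1 := (isTree_iff_connected_and_card.1 hS3).2
    have h2 := (isTree_iff_connected_and_card.1 (⟨hTc, hTa⟩ : T.IsTree)).2
    rw [Nat.card_coe_set_eq] at h1 h2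
    omega
  have hEq : T'.edgeSet = S.edgeSet :=
    Set.eq_of_subset_of_ncard_le (SimpleGraph.edgeSet_mono hS1) (by omega) (Set.toFinite _)
  have hT'S : T' = S := SimpleGraph.edgeSet_injective hEq
  have hm := hmin T' hT'G (hT'S ▸ hS3.connected) hT'a
  rw [hE, hTE, finsum_mem_insert _ hdF hfin, finsum_mem_insert _ heF hfin] at hm
  linarith

/-- A minimum spanning tree of a connected graph with edge weights injective on
the edge set is path-max equivalent to the graph. -/
theorem mst_pathMax_equivalent {V : Type*} [Fintype V] (G : SimpleGraph V)
    (w : Sym2 V → ℝ) (hG : G.Connected) (hw : Set.InjOn w G.edgeSet)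
    (T : SimpleGraph V) (hTG : T ≤ G) (hTc : T.Connected) (hTa : T.IsAcyclic)
    (hmin : ∀ T' : SimpleGraph V, T' ≤ G → T'.Connected → T'.IsAcyclic →
      (∑ᶠ e ∈ T.edgeSet, w e) ≤ ∑ᶠ e ∈ T'.edgeSet, w e) :
    ∀ u v : V, pathMax T w u v = pathMax G w u v := by
  classical
  intro u v
  obtain ⟨p, hp⟩ := hTc.exists_isPath u v
  have hT : {m | ∃ p : T.Walk u v, p.IsPath ∧ m = walkMax w p} = {walkMax w p} := by
    ext m
    constructor
    · rintro ⟨q, hq, rfl⟩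
      have h2 := hTa.path_unique ⟨p, hp⟩ ⟨q, hq⟩
      have h3 : p = q := congrArg Subtype.val h2
      rw [h3]; rfl
    · rintro rfl
      exact ⟨p, hp, rfl⟩
  have hGm : walkMax w (p.mapLe hTG) = walkMax w p := by
    unfold walkMax
    rw [SimpleGraph.Walk.edges_mapLe_eq_edges]
  have hL : IsLeast {m | ∃ p : G.Walk u v, p.IsPath ∧ m = walkMax w p} (walkMax w p) := by
    refine ⟨⟨p.mapLe hTG, (SimpleGraph.Walk.isPath_mapLe hTG).2 hp, hGm.symm⟩, ?_⟩
    rintro m ⟨q, hq, rfl⟩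
    by_cases huv : u = v
    · subst huv
      rw [SimpleGraph.Walk.isPath_iff_eq_nil] at hp hq
      subst hp hq
      simp [walkMax]
    · unfold walkMax
      have hpn : p.edges ≠ [] := by
        cases p with
        | nil => exact absurd rfl huv
        | cons h r => simp
      refine csSup_le ?_ ?_
      · obtain ⟨a, ha⟩ := List.exists_mem_of_ne_nil _ hpn
        exact ⟨w a, a, ha, rfl⟩
      · rintro _ ⟨e, he, rfl⟩
        obtain ⟨f, hf, hle⟩ := mst_exchange G w hG T hTG hTc hTa hmin p hp q e he
        exact hle.trans (le_csSup (Set.toFinite _).bddAbove ⟨f, hf, rfl⟩)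
  unfold pathMax
  rw [hT, csInf_singleton, hL.csInf_eq]
end

section
/- Let V be a finite vertex type, G a connected simple graph on V, and w : Sym2 V → ℝ an edge-weight function that is injective on the edge set of G. Let C be a cycle in G and let e be the edge of C with the largest weight among the edges of C. Then e does not belong to any minimum spanning tree of G: for every connected acyclic spanning subgraph T ≤ G minimizing Σ_{e ∈ edges(T)} w(e), e ∉ edges(T). (The red rule: the edge with the largest weight on a cycle is not included in the MST.) -/
theorem reach_of_adj {V : Type*} {H F : SimpleGraph V}
    (h : ∀ x y, H.Adj x y → F.Reachable x y) {x y : V} (hxy : H.Reachable x y) :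
    F.Reachable x y := by
  obtain ⟨p⟩ := hxy
  induction p with
  | nil => exact SimpleGraph.Reachable.refl _
  | cons hadj _ ih => exact (h _ _ hadj).trans ih

/-- The red rule: in a connected graph with edge weights injective on the edge
set, the edge with the largest weight on a cycle does not belong to any
minimum spanning tree. -/
theorem red_rule {V : Type*} [Fintype V] (G : SimpleGraph V) (w : Sym2 V → ℝ)
    (hG : G.Connected) (hw : Set.InjOn w G.edgeSet)
    (v : V) (c : G.Walk v v) (hc : c.IsCycle)
    (e : Sym2 V) (he : e ∈ c.edges) (hemax : ∀ e' ∈ c.edges, w e' ≤ w e) :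
    ∀ T : SimpleGraph V, T ≤ G → T.Connected → T.IsAcyclic →
      (∀ T' : SimpleGraph V, T' ≤ G → T'.Connected → T'.IsAcyclic →
        (∑ᶠ e'' ∈ T.edgeSet, w e'') ≤ ∑ᶠ e'' ∈ T'.edgeSet, w e'') →
      e ∉ T.edgeSet := by
  intro T hTG hTc hTa hmin heT
  have hbr : T.IsBridge e := SimpleGraph.isAcyclic_iff_forall_isBridge.1 hTa heT
  induction e with | h a b
  rw [SimpleGraph.isBridge_iff] at hbr
  set F := T.deleteEdges {s(a, b)} with hF
  have hFT : F ≤ T := SimpleGraph.deleteEdges_le _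
  -- a crossing edge
  have hex : ∃ x y, s(x, y) ∈ c.edges ∧ s(x, y) ≠ s(a, b) ∧ ¬ F.Reachable x y := by
    by_contra! hcon
    apply hbr
    let H : SimpleGraph V := SimpleGraph.fromEdgeSet {f | f ∈ c.edges}
    have hH : ∀ f ∈ c.edges, f ∈ H.edgeSet := by
      intro f hf
      have := G.not_isDiag_of_mem_edgeSet (c.edges_subset_edgeSet hf)
      simp [H, hf, this]
    have hcH := hc.transfer hH
    have hnb : ¬ H.IsBridge s(a, b) := fun hb =>
      hb.notMem_edges_of_isCycle hcH (by simpa using he)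
    rw [SimpleGraph.isBridge_iff, not_not] at hnb
    refine reach_of_adj (fun x y hxy => ?_) hnb
    rw [SimpleGraph.deleteEdges_adj] at hxy
    refine hcon x y ?_ (by simpa using hxy.2)
    have := hxy.1
    simp only [H, SimpleGraph.fromEdgeSet_adj] at this
    exact this.1
  obtain ⟨x, y, hxyc, hne, hnr⟩ := hex
  have hxyG : s(x, y) ∈ G.edgeSet := c.edges_subset_edgeSet hxyc
  have hxy : x ≠ y := G.ne_of_adj hxyG
  have hlt : w s(x, y) < w s(a, b) :=
    lt_of_le_of_ne (hemax _ hxyc) fun h => hne (hw hxyG (hTG heT) h)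
  have hside : ∀ z, F.Reachable a z ∨ F.Reachable b z := by
    have key : ∀ z z' (p : T.Walk z z'), (F.Reachable a z' ∨ F.Reachable b z') →
        (F.Reachable a z ∨ F.Reachable b z) := by
      intro z z' p
      induction p with
      | nil => exact id
      | @cons p q r hadj _ ih =>
        intro h0
        by_cases h : s(p, q) = s(a, b)
        · rcases Sym2.eq_iff.1 h with ⟨rfl, rfl⟩ | ⟨rfl, rfl⟩
          · exact Or.inl (SimpleGraph.Reachable.refl _)
          · exact Or.inr (SimpleGraph.Reachable.refl _)
        · have hqp : F.Reachable q p :=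
            (SimpleGraph.Adj.reachable (by simpa [hF, hadj] using h)).symm
          exact (ih h0).imp (fun t => t.trans hqp) (fun t => t.trans hqp)
    intro z
    obtain ⟨p⟩ := hTc.preconnected z a
    exact key z a p (Or.inl (SimpleGraph.Reachable.refl _))
  have hle : F ≤ F ⊔ SimpleGraph.edge x y := le_sup_left
  have hadj' : (F ⊔ SimpleGraph.edge x y).Reachable x y :=
    SimpleGraph.Adj.reachable (Or.inr (by simp [SimpleGraph.edge_adj, hxy]))
  have hab : (F ⊔ SimpleGraph.edge x y).Reachable a b := by
    rcases hside x with hx | hx <;> rcases hside y with hy | hy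
    · exact absurd (hx.symm.trans hy) hnr
    · exact ((hx.mono hle).trans hadj').trans (hy.mono hle).symm
    · exact ((hy.mono hle).trans hadj'.symm).trans (hx.mono hle).symm
    · exact absurd (hx.symm.trans hy) hnr
  have hsum := hmin (F ⊔ SimpleGraph.edge x y) ?_ ?_ ?_
  · have h1 : T.edgeSet = insert s(a, b) F.edgeSet := by
      rw [hF, SimpleGraph.edgeSet_deleteEdges, Set.insert_sdiff_singleton, Set.insert_eq_of_mem heT]
    have h2 : (F ⊔ SimpleGraph.edge x y).edgeSet = insert s(x, y) F.edgeSet := by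
      rw [SimpleGraph.edgeSet_sup, SimpleGraph.edgeSet_edge_of_ne hxy, Set.union_comm]; rfl
    rw [h1, h2, finsum_mem_insert _ _ (Set.toFinite _), finsum_mem_insert _ _ (Set.toFinite _)]
      at hsum
    · linarith
    · exact fun h => hnr (SimpleGraph.Adj.reachable h)
    · exact fun h => hbr (SimpleGraph.Adj.reachable h)
  · refine sup_le (hFT.trans hTG) ?_
    intro p q hpq
    rw [SimpleGraph.edge_adj] at hpq
    rcases hpq.1 with ⟨rfl, rfl⟩ | ⟨rfl, rfl⟩
    · exact hxyG
    · exact SimpleGraph.Adj.symm hxyG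
  · have := hTc.nonempty
    refine ⟨fun p q => reach_of_adj (fun p q hpq => ?_) (hTc.preconnected p q)⟩
    by_cases h : s(p, q) = s(a, b)
    · rcases Sym2.eq_iff.1 h with ⟨rfl, rfl⟩ | ⟨rfl, rfl⟩
      · exact hab
      · exact hab.symm
    · exact SimpleGraph.Adj.reachable (Or.inl (by simpa [hF, hpq] using h))
  · exact SimpleGraph.IsAcyclic.sup_edge_of_not_reachable hnr (hTa.anti hFT)
end

section
/- (TW transformation.) Let V be a finite vertex type, G a simple graph on V with edge-weight function w : Sym2 V → ℝ, and let x, y, z be distinct vertices such that G.Adj x y, G.Adj y z, ¬G.Adj x z, and w({x,y}) ≥ w({y,z}). Let G' be the graph obtained from G by deleting the edge {x,y} and adding the edge {x,z}, with weight function w' agreeing with w on all edges except that w'({x,z}) = w({x,y}). Then G' is path-max equivalent to G: for all vertices u and v, u and v are connected in G' iff they are connected in G, and in that case PathMax_{G'}(u,v) = PathMax_G(u,v). -/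
theorem tw_walk {V : Type*} {G G' : SimpleGraph V} {w w' : Sym2 V → ℝ}
    (H : ∀ a b, G.Adj a b → ∃ q : G'.Walk a b, ∀ e ∈ q.edges, w' e ≤ w s(a, b))
    {u v : V} (p : G.Walk u v) :
    ∃ q : G'.Walk u v, ∀ e ∈ q.edges, ∃ f ∈ p.edges, w' e ≤ w f := by
  induction p with
  | nil => exact ⟨SimpleGraph.Walk.nil, by simp⟩
  | @cons a b c h p ih =>
    obtain ⟨q, hq⟩ := ih
    obtain ⟨r, hr⟩ := H _ _ h
    refine ⟨r.append q, fun e he => ?_⟩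
    rw [SimpleGraph.Walk.edges_append, List.mem_append] at he
    rcases he with he | he
    · exact ⟨s(a, b), by simp, hr e he⟩
    · obtain ⟨f, hf, hle⟩ := hq e he
      exact ⟨f, by simp [hf], hle⟩

theorem tw_bdd {V : Type*} {G : SimpleGraph V} (w : Sym2 V → ℝ)
    {u v : V} (p : G.Walk u v) : BddAbove (w '' {e | e ∈ p.edges}) :=
  ((List.finite_toSet p.edges).image w).bddAbove

theorem tw_edge {V : Type*} {G : SimpleGraph V}
    {u v : V} (huv : u ≠ v) (p : G.Walk u v) : ∃ e, e ∈ p.edges := by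
  cases p with
  | nil => exact absurd rfl huv
  | cons h p => exact ⟨_, by rw [SimpleGraph.Walk.edges_cons]; exact List.mem_cons_self⟩

theorem tw_le {V : Type*} [Fintype V] {G G' : SimpleGraph V} {w w' : Sym2 V → ℝ}
    (H : ∀ a b, G.Adj a b → ∃ q : G'.Walk a b, ∀ e ∈ q.edges, w' e ≤ w s(a, b))
    {u v : V} (huv : u ≠ v) (hr : G.Reachable u v) :
    pathMax G' w' u v ≤ pathMax G w u v := by
  classical
  unfold pathMax
  apply le_csInf
  · obtain ⟨p⟩ := hr
    exact ⟨_, p.bypass, p.bypass_isPath, rfl⟩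
  · rintro _ ⟨p, -, rfl⟩
    obtain ⟨q, hq⟩ := tw_walk H p
    refine le_trans (csInf_le ?_ ⟨q.bypass, q.bypass_isPath, rfl⟩) ?_
    · obtain ⟨b, hb⟩ := (Set.finite_range w').bddBelow
      refine ⟨b, ?_⟩
      rintro _ ⟨r, -, rfl⟩
      obtain ⟨e, he⟩ := tw_edge huv r
      exact le_trans (hb ⟨e, rfl⟩) (le_csSup (tw_bdd w' r) ⟨e, he, rfl⟩)
    · obtain ⟨e, he⟩ := tw_edge huv q.bypass
      refine csSup_le ⟨w' e, e, he, rfl⟩ ?_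
      rintro _ ⟨e, he, rfl⟩
      obtain ⟨f, hf, hle⟩ := hq e (q.edges_bypass_subset_edges he)
      exact le_trans hle (le_csSup (tw_bdd w p) ⟨f, hf, rfl⟩)

theorem tw_self {V : Type*} (G : SimpleGraph V) (w : Sym2 V → ℝ) (u : V) :
    pathMax G w u u = 0 := by
  have : {m | ∃ p : G.Walk u u, p.IsPath ∧ m = walkMax w p} = {0} := by
    ext m
    constructor
    · rintro ⟨p, hp, rfl⟩
      rw [SimpleGraph.Walk.isPath_iff_eq_nil] at hp
      subst hp
      simp [walkMax]
    · rintro rfl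
      exact ⟨SimpleGraph.Walk.nil, by simp, by simp [walkMax]⟩
  rw [pathMax, this, csInf_singleton]

/-- The TW transformation: if `G.Adj x y`, `G.Adj y z`, `¬ G.Adj x z` and
`w {x,y} ≥ w {y,z}`, then replacing the edge `{x,y}` by the edge `{x,z}`
(carrying the weight of `{x,y}`) preserves connectivity and path-max queries. -/
theorem tw_transformation {V : Type*} [Fintype V] (G : SimpleGraph V)
    (w w' : Sym2 V → ℝ) (x y z : V)
    (hxy : x ≠ y) (hyz : y ≠ z) (hxz : x ≠ z)
    (haxy : G.Adj x y) (hayz : G.Adj y z) (hnxz : ¬ G.Adj x z)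
    (hwge : w s(x, y) ≥ w s(y, z))
    (hw'new : w' s(x, z) = w s(x, y))
    (hw'old : ∀ e : Sym2 V, e ≠ s(x, z) → w' e = w e) :
    ∀ u v : V,
      ((SimpleGraph.fromEdgeSet ((G.edgeSet \ {s(x, y)}) ∪ {s(x, z)})).Reachable u v ↔
        G.Reachable u v) ∧
      (G.Reachable u v →
        pathMax (SimpleGraph.fromEdgeSet ((G.edgeSet \ {s(x, y)}) ∪ {s(x, z)})) w' u v =
          pathMax G w u v) := by
  generalize hG' : SimpleGraph.fromEdgeSet ((G.edgeSet \ {s(x, y)}) ∪ {s(x, z)}) = G'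
  have hadj : ∀ a b, G'.Adj a b ↔ ((G.Adj a b ∧ s(a, b) ≠ s(x, y)) ∨ s(a, b) = s(x, z)) := by
    intro a b
    rw [← hG', SimpleGraph.fromEdgeSet_adj]
    simp only [Set.mem_union, Set.mem_sdiff, SimpleGraph.mem_edgeSet, Set.mem_singleton_iff]
    constructor
    · exact fun h => h.1
    · intro h
      refine ⟨h, ?_⟩
      rintro rfl
      rcases h with h | h
      · exact G.loopless.irrefl _ h.1
      · rw [Sym2.eq_iff] at h
        grind
  have nzy : s(z, y) ≠ s(x, y) := by rw [Ne, Sym2.eq_iff]; grind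
  have nzy' : s(z, y) ≠ s(x, z) := by rw [Ne, Sym2.eq_iff]; grind
  have h1 : G'.Adj x z := (hadj _ _).2 (Or.inr rfl)
  have h2 : G'.Adj z y := (hadj _ _).2 (Or.inl ⟨hayz.symm, nzy⟩)
  have e2 : w' s(z, y) ≤ w s(x, y) := by
    rw [hw'old _ nzy', Sym2.eq_swap]; exact hwge
  have H : ∀ a b, G.Adj a b → ∃ q : G'.Walk a b, ∀ e ∈ q.edges, w' e ≤ w s(a, b) := by
    intro a b hab
    by_cases h : s(a, b) = s(x, y)
    · have key : ∃ q : G'.Walk x y, ∀ e ∈ q.edges, w' e ≤ w s(x, y) := by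
        refine ⟨.cons h1 (.cons h2 .nil), ?_⟩
        simp [hw'new, e2]
      rw [h]
      rcases Sym2.eq_iff.1 h with ⟨rfl, rfl⟩ | ⟨rfl, rfl⟩
      · exact key
      · obtain ⟨q, hq⟩ := key
        exact ⟨q.reverse, by simpa using hq⟩
    · refine ⟨.cons ((hadj _ _).2 (Or.inl ⟨hab, h⟩)) .nil, ?_⟩
      have : s(a, b) ≠ s(x, z) := by
        intro h'
        rw [← SimpleGraph.mem_edgeSet, h', SimpleGraph.mem_edgeSet] at hab
        exact hnxz hab
      simp [hw'old _ this]
  have H' : ∀ a b, G'.Adj a b → ∃ q : G.Walk a b, ∀ e ∈ q.edges, w e ≤ w' s(a, b) := by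
    intro a b hab
    by_cases h : s(a, b) = s(x, z)
    · have key : ∃ q : G.Walk x z, ∀ e ∈ q.edges, w e ≤ w' s(x, z) := by
        refine ⟨.cons haxy (.cons hayz .nil), ?_⟩
        simpa [hw'new] using hwge
      rw [h]
      rcases Sym2.eq_iff.1 h with ⟨rfl, rfl⟩ | ⟨rfl, rfl⟩
      · exact key
      · obtain ⟨q, hq⟩ := key
        exact ⟨q.reverse, by simpa using hq⟩
    · have hab' := ((hadj _ _).1 hab).resolve_right h
      refine ⟨.cons hab'.1 .nil, ?_⟩
      simp [hw'old _ h]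
  intro u v
  have hr : G'.Reachable u v ↔ G.Reachable u v := by
    constructor
    · rintro ⟨p⟩
      exact ⟨(tw_walk H' p).choose⟩
    · rintro ⟨p⟩
      exact ⟨(tw_walk H p).choose⟩
  refine ⟨hr, fun h => ?_⟩
  by_cases huv : u = v
  · subst huv
    rw [tw_self, tw_self]
  · exact le_antisymm (tw_le H huv h) (tw_le H' huv (hr.2 h))
end

section
/- (Point-interval temporal connectivity via incremental MST.) Let V be a finite vertex type, G a simple graph on V, and t : Sym2 V → ℝ a timestamp function that is injective on the edge set of G. Fix reals t₁ ≤ t₂. Let G_{≤t₂} be the subgraph of G consisting of the edges e with t(e) ≤ t₂, and assume G_{≤t₂} is connected. Let T be a spanning tree of G_{≤t₂} maximizing the total timestamp Σ_{e ∈ edges(T)} t(e) among all spanning trees of G_{≤t₂} (equivalently, the minimum spanning tree under weight −t). Then for all vertices u and v: u and v are connected in the subgraph G_{[t₁,t₂]} of G consisting of the edges e with t₁ ≤ t(e) ≤ t₂ if and only if every edge on the unique path in T from u to v has timestamp at least t₁. -/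
/-- Point-interval temporal connectivity via incremental MST: if `T` is the
spanning tree of the subgraph of edges with timestamp at most `t₂` maximizing
the total timestamp, then two vertices are connected by edges with timestamps
in `[t₁, t₂]` iff every edge on the (unique) path between them in `T` has
timestamp at least `t₁`. -/
theorem point_interval_connectivity {V : Type*} [Fintype V]
    (G : SimpleGraph V) (t : Sym2 V → ℝ) (hinj : Set.InjOn t G.edgeSet)
    (t₁ t₂ : ℝ) (ht : t₁ ≤ t₂)
    (hconn : (SimpleGraph.fromEdgeSet {e | e ∈ G.edgeSet ∧ t e ≤ t₂}).Connected)
    (T : SimpleGraph V)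
    (hT : T ≤ SimpleGraph.fromEdgeSet {e | e ∈ G.edgeSet ∧ t e ≤ t₂})
    (hTc : T.Connected) (hTa : T.IsAcyclic)
    (hmax : ∀ T' : SimpleGraph V,
      T' ≤ SimpleGraph.fromEdgeSet {e | e ∈ G.edgeSet ∧ t e ≤ t₂} →
      T'.Connected → T'.IsAcyclic →
      (∑ᶠ e ∈ T'.edgeSet, t e) ≤ ∑ᶠ e ∈ T.edgeSet, t e) :
    ∀ u v : V,
      (SimpleGraph.fromEdgeSet
          {e | e ∈ G.edgeSet ∧ t₁ ≤ t e ∧ t e ≤ t₂}).Reachable u v ↔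
      ∀ p : T.Walk u v, p.IsPath → ∀ e ∈ p.edges, t₁ ≤ t e := by
  classical
  intro u v
  constructor
  · intro huv p hp e he
    by_contra hlt
    push Not at hlt
    have heT : e ∈ T.edgeSet := p.edges_subset_edgeSet he
    have hnuv : ¬ (T.deleteEdges {e}).Reachable u v := by
      intro h
      obtain ⟨q, hq⟩ := h.exists_isPath
      have hle : T.deleteEdges {e} ≤ T := T.deleteEdges_le {e}
      have h1 := hTa.path_unique ⟨p, hp⟩ ⟨q.mapLe hle, (SimpleGraph.Walk.isPath_mapLe hle).2 hq⟩
      have h2 : p = q.mapLe hle := congrArg Subtype.val h1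
      rw [h2, SimpleGraph.Walk.edges_mapLe_eq_edges] at he
      have h3 := q.edges_subset_edgeSet he
      rw [SimpleGraph.edgeSet_deleteEdges] at h3
      exact h3.2 rfl
    obtain ⟨x, y, hxy, hnxy⟩ : ∃ x y, (SimpleGraph.fromEdgeSet
          {e | e ∈ G.edgeSet ∧ t₁ ≤ t e ∧ t e ≤ t₂}).Adj x y ∧
          ¬ (T.deleteEdges {e}).Reachable x y := by
      by_contra hcon
      push Not at hcon
      apply hnuv
      obtain ⟨w⟩ := huv
      clear hp he p hnuv
      induction w with
      | nil => exact SimpleGraph.Reachable.refl _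
      | cons h _ ih => exact (hcon _ _ h).trans ih
    have hxy' := hxy
    rw [SimpleGraph.fromEdgeSet_adj] at hxy'
    obtain ⟨⟨hG, h1, h2⟩, hne⟩ := hxy'
    set T' := T.deleteEdges {e} ⊔ SimpleGraph.edge x y with hT'
    have hle0 : T.deleteEdges {e} ≤ T' := le_sup_left
    have hadj' : T'.Adj x y := by
      rw [hT', SimpleGraph.sup_adj, SimpleGraph.edge_adj]
      right; exact ⟨Or.inl ⟨rfl, rfl⟩, hne⟩
    have hac : T'.IsAcyclic :=
      SimpleGraph.IsAcyclic.sup_edge_of_not_reachable hnxy (hTa.anti (T.deleteEdges_le {e}))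
    have hT'le : T' ≤ SimpleGraph.fromEdgeSet {e | e ∈ G.edgeSet ∧ t e ≤ t₂} := by
      refine sup_le ((T.deleteEdges_le {e}).trans hT) ?_
      rw [SimpleGraph.edge_le_iff]
      right
      rw [SimpleGraph.fromEdgeSet_adj]
      exact ⟨⟨hG, h2⟩, hne⟩
    have hcn : T'.Connected := by
      induction e using Sym2.ind with
      | _ a b =>
      have key : ∀ w, (T.deleteEdges {s(a,b)}).Reachable w a ∨
          (T.deleteEdges {s(a,b)}).Reachable w b := by
        intro w
        obtain ⟨q⟩ := hTc.preconnected w a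
        have gen : ∀ (w c : V) (_ : T.Walk w c), c = a → (T.deleteEdges {s(a,b)}).Reachable w a ∨
          (T.deleteEdges {s(a,b)}).Reachable w b := by
          intro w c q
          induction q with
          | nil => rintro rfl; left; exact SimpleGraph.Reachable.refl _
          | @cons w w' c h _ ih =>
            intro hc
            by_cases hh : s(w, w') = s(a, b)
            · rw [Sym2.eq_iff] at hh
              rcases hh with ⟨rfl, _⟩ | ⟨rfl, _⟩
              · left; exact SimpleGraph.Reachable.refl _
              · right; exact SimpleGraph.Reachable.refl _
            · have : (T.deleteEdges {s(a,b)}).Adj w w' := by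
                rw [SimpleGraph.deleteEdges_adj]; exact ⟨h, hh⟩
              exact (ih hc).imp this.reachable.trans this.reachable.trans
        exact gen w a q rfl
      have hab : T'.Reachable a b := by
        rcases key x with hx | hx <;> rcases key y with hy | hy
        · exact absurd (hx.trans hy.symm) hnxy
        · exact (hx.symm.mono hle0).trans (hadj'.reachable.trans (hy.mono hle0))
        · exact (hy.symm.mono hle0).trans (hadj'.symm.reachable.trans (hx.mono hle0))
        · exact absurd (hx.trans hy.symm) hnxy
      have hwa : ∀ w, T'.Reachable w a := fun w =>
        (key w).elim (fun h => h.mono hle0) (fun h => (h.mono hle0).trans hab.symm)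
      have : Nonempty V := ⟨a⟩
      exact ⟨fun w z => (hwa w).trans (hwa z).symm⟩
    have hs := hmax T' hT'le hcn hac
    have hE' : T'.edgeSet = insert s(x, y) (T.edgeSet \ {e}) := by
      rw [hT', SimpleGraph.edgeSet_sup, SimpleGraph.edgeSet_deleteEdges,
        SimpleGraph.edgeSet_edge_of_ne hne, Set.union_singleton]
    have hE : T.edgeSet = insert e (T.edgeSet \ {e}) := by
      rw [Set.insert_diff_singleton, Set.insert_eq_of_mem heT]
    have hnf : s(x, y) ∉ T.edgeSet \ {e} := by
      intro h
      rw [← SimpleGraph.edgeSet_deleteEdges] at h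
      exact hnxy (SimpleGraph.Adj.reachable h)
    rw [hE', finsum_mem_insert _ hnf (Set.toFinite _)] at hs
    have hS : ∑ᶠ e' ∈ T.edgeSet, t e' = t e + ∑ᶠ e' ∈ T.edgeSet \ {e}, t e' := by
      conv_lhs => rw [hE]
      exact finsum_mem_insert _ (by simp) (Set.toFinite _)
    linarith
  · intro h
    obtain ⟨p, hp⟩ := (hTc.preconnected u v).exists_isPath
    refine ⟨p.transfer _ ?_⟩
    intro e he
    have h1 := SimpleGraph.edgeSet_mono hT (p.edges_subset_edgeSet he)
    rw [SimpleGraph.edgeSet_fromEdgeSet] at h1 ⊢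
    exact ⟨⟨h1.1.1, h p hp e he, h1.1.2⟩, h1.2⟩
end

section
/- (Counting connected components in the point-interval setting.) Let V be a finite vertex type with |V| = n, G a simple graph on V, and t : Sym2 V → ℝ a timestamp function injective on the edge set of G. Fix reals t₁ ≤ t₂, let G_{≤t₂} be the subgraph of G with edges e satisfying t(e) ≤ t₂, assume G_{≤t₂} is connected, and let T be a spanning tree of G_{≤t₂} maximizing Σ_{e ∈ edges(T)} t(e) among spanning trees of G_{≤t₂}. Then the number of connected components of the subgraph G_{[t₁,t₂]} of G consisting of the edges e with t₁ ≤ t(e) ≤ t₂ equals n minus the number of edges e of T with t(e) ≥ t₁. -/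
open SimpleGraph in
lemma aux_reach {V : Type*} (F : SimpleGraph V) (a b : V) {x y : V}
    (h : (F ⊔ edge a b).Reachable x y) :
    F.Reachable x y ∨ (F.Reachable x a ∧ F.Reachable b y) ∨
      (F.Reachable x b ∧ F.Reachable a y) := by
  obtain ⟨p⟩ := h
  induction p with
  | nil => exact Or.inl (Reachable.refl _)
  | @cons x z y hxz p ih =>
    rw [sup_adj, edge_adj] at hxz
    rcases hxz with h | ⟨⟨rfl, rfl⟩ | ⟨rfl, rfl⟩, -⟩
    · have h := h.reachable
      rcases ih with i | ⟨i, j⟩ | ⟨i, j⟩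
      · exact Or.inl (h.trans i)
      · exact Or.inr (Or.inl ⟨h.trans i, j⟩)
      · exact Or.inr (Or.inr ⟨h.trans i, j⟩)
    · rcases ih with i | ⟨i, j⟩ | ⟨i, j⟩
      · exact Or.inr (Or.inl ⟨Reachable.refl _, i⟩)
      · exact Or.inr (Or.inl ⟨Reachable.refl _, j⟩)
      · exact Or.inl j
    · rcases ih with i | ⟨i, j⟩ | ⟨i, j⟩
      · exact Or.inr (Or.inr ⟨Reachable.refl _, i⟩)
      · exact Or.inl j
      · exact Or.inr (Or.inr ⟨Reachable.refl _, j⟩)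

open SimpleGraph in
lemma aux_card_sup {V : Type*} [Finite V] (F : SimpleGraph V) (a b : V) (hne : a ≠ b)
    (hab : ¬ F.Reachable a b) :
    Nat.card F.ConnectedComponent = Nat.card (F ⊔ edge a b).ConnectedComponent + 1 := by
  classical
  have hadj : (F ⊔ edge a b).Reachable a b :=
    Adj.reachable (by rw [sup_adj, edge_adj]; exact Or.inr ⟨Or.inl ⟨rfl, rfl⟩, hne⟩)
  have hle : F ≤ F ⊔ edge a b := le_sup_left
  let g : {c : F.ConnectedComponent // c ≠ F.connectedComponentMk b} →
      (F ⊔ edge a b).ConnectedComponent := fun c => c.1.map (Hom.ofLE hle)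
  have hg : Function.Bijective g := by
    constructor
    · rintro ⟨c, hc⟩ ⟨d, hd⟩ h
      induction c using ConnectedComponent.ind with | _ x =>
      induction d using ConnectedComponent.ind with | _ y =>
      have h' : (F ⊔ edge a b).Reachable x y := ConnectedComponent.exact h
      apply Subtype.ext
      rw [Ne, ConnectedComponent.eq] at hc hd
      show F.connectedComponentMk x = F.connectedComponentMk y
      rw [ConnectedComponent.eq]
      rcases aux_reach F a b h' with i | ⟨i, j⟩ | ⟨i, j⟩
      · exact i
      · exact absurd j.symm hd
      · exact absurd i hc
    · intro c
      induction c using ConnectedComponent.ind with | _ x =>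
      by_cases hx : F.Reachable x b
      · refine ⟨⟨F.connectedComponentMk a, by rwa [Ne, ConnectedComponent.eq]⟩, ?_⟩
        exact ConnectedComponent.sound (hadj.trans (hx.mono hle).symm)
      · exact ⟨⟨F.connectedComponentMk x, by rwa [Ne, ConnectedComponent.eq]⟩, rfl⟩
  rw [← Nat.card_eq_of_bijective g hg]
  have := Fintype.ofFinite F.ConnectedComponent
  rw [Nat.card_eq_fintype_card, Nat.card_eq_fintype_card, Fintype.card_subtype_compl,
    Fintype.card_subtype_eq]
  have : 0 < Fintype.card F.ConnectedComponent :=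
    Fintype.card_pos_iff.2 ⟨F.connectedComponentMk b⟩
  omega

open SimpleGraph in
lemma aux_forest {V : Type*} [Finite V] (k : ℕ) : ∀ (F : SimpleGraph V), F.IsAcyclic →
    F.edgeSet.ncard = k → Nat.card F.ConnectedComponent + k = Nat.card V := by
  induction k with
  | zero =>
    intro F _ h0
    rw [Set.ncard_eq_zero (Set.toFinite _), edgeSet_eq_empty] at h0
    subst h0
    rw [add_zero]
    symm
    refine Nat.card_eq_of_bijective (fun v => (⊥ : SimpleGraph V).connectedComponentMk v)
      ⟨fun x y h => ?_, fun c => ?_⟩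
    · exact reachable_bot.1 (ConnectedComponent.exact h)
    · induction c using ConnectedComponent.ind with | _ x => exact ⟨x, rfl⟩
  | succ k ih =>
    intro F hF hk
    obtain ⟨e, he⟩ : F.edgeSet.Nonempty := by
      rw [← Set.ncard_pos (Set.toFinite _)]; omega
    induction e using Sym2.ind with | _ a b =>
    have hbr : ¬ (F.deleteEdges {s(a, b)}).Reachable a b :=
      isBridge_iff.1 (isAcyclic_iff_forall_isBridge.1 hF he)
    have hab : F.Adj a b := he
    have hsup : F.deleteEdges {s(a, b)} ⊔ edge a b = F := by
      rw [← edgeSet_inj, edgeSet_sup, edgeSet_deleteEdges, edgeSet_edge_of_ne hab.ne]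
      exact Set.diff_union_of_subset (by simpa using hab)
    have h1 := aux_card_sup _ a b hab.ne hbr
    rw [hsup] at h1
    have h2 := ih (F.deleteEdges {s(a, b)}) (hF.anti (deleteEdges_le _)) (by
      rw [edgeSet_deleteEdges, Set.ncard_diff_singleton_of_mem he]; omega)
    omega

open SimpleGraph in
lemma aux_exchange {V : Type*} [Finite V] (K T : SimpleGraph V) (t : Sym2 V → ℝ)
    (hT : T ≤ K) (hTc : T.Connected) (hTa : T.IsAcyclic)
    (hmax : ∀ T' : SimpleGraph V, T' ≤ K → T'.Connected → T'.IsAcyclic →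
      (∑ᶠ e ∈ T'.edgeSet, t e) ≤ ∑ᶠ e ∈ T.edgeSet, t e)
    {u v : V} (huv : K.Adj u v) (hn : ¬ T.Adj u v) (p : T.Walk u v) (hp : p.IsPath)
    (f : Sym2 V) (hf : f ∈ p.edges) : t s(u, v) ≤ t f := by
  classical
  have hfT : f ∈ T.edgeSet := p.edges_subset_edgeSet hf
  have hne : s(u, v) ≠ f := by rintro rfl; exact hn hfT
  have hnr : ¬ (T.deleteEdges {f}).Reachable u v := by
    intro h
    obtain ⟨q, hq⟩ := h.exists_isPath
    have hle : T.deleteEdges {f} ≤ T := deleteEdges_le _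
    have := hTa.path_unique ⟨p, hp⟩ ⟨q.mapLe hle, hq.mapLe hle⟩
    have h2 : p = q.mapLe hle := congrArg Subtype.val this
    rw [h2, Walk.edges_mapLe_eq_edges] at hf
    have := q.edges_subset_edgeSet hf
    rw [edgeSet_deleteEdges] at this
    exact this.2 rfl
  have hacyc := (hTa.anti (deleteEdges_le {f})).sup_edge_of_not_reachable hnr
  have hes : (T.deleteEdges {f} ⊔ edge u v).edgeSet = insert s(u, v) (T.edgeSet \ {f}) := by
    rw [edgeSet_sup, edgeSet_deleteEdges, edgeSet_edge_of_ne huv.ne, Set.union_singleton]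
  have hconn : (T.deleteEdges {f} ⊔ edge u v).Connected := by
    have heq : T.deleteEdges {f} ⊔ edge u v = (T ⊔ edge u v).deleteEdges {f} := by
      rw [← edgeSet_inj, hes, edgeSet_deleteEdges, edgeSet_sup, edgeSet_edge_of_ne huv.ne,
        Set.union_singleton, Set.insert_diff_of_notMem _ (by simpa using hne)]
    rw [heq]
    have hnb : ¬ (T ⊔ edge u v).IsBridge f := by
      intro hb
      have hvu : (T ⊔ edge u v).Adj v u := by
        rw [sup_adj, edge_adj]; exact Or.inr ⟨Or.inr ⟨rfl, rfl⟩, huv.ne'⟩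
      have hle : T ≤ T ⊔ edge u v := le_sup_left
      refine hb.notMem_edges_of_isCycle (p := Walk.cons hvu (p.mapLe hle)) ?_ ?_
      · rw [Walk.cons_isCycle_iff]
        refine ⟨hp.mapLe hle, ?_⟩
        rw [Walk.edges_mapLe_eq_edges]
        intro h
        exact hn (p.adj_of_mem_edges h).symm
      · rw [Walk.edges_cons, Walk.edges_mapLe_eq_edges]
        exact List.mem_cons_of_mem _ hf
    have hc : (T ⊔ edge u v).Connected := hTc.mono le_sup_left
    induction f using Sym2.ind with | _ a b =>
    exact hc.connected_delete_edge_of_not_isBridge hnb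
  have hle : T.deleteEdges {f} ⊔ edge u v ≤ K :=
    sup_le ((deleteEdges_le _).trans hT) ((edge_le_iff K).2 (Or.inr huv))
  have hm := hmax _ hle hconn hacyc
  have hTe : T.edgeSet = insert f (T.edgeSet \ {f}) := by
    rw [Set.insert_diff_singleton, Set.insert_eq_of_mem hfT]
  rw [hes, finsum_mem_insert _ (fun h => hn h.1) (Set.toFinite _)] at hm
  rw [hTe, Set.insert_diff_self_of_notMem (by simp),
    finsum_mem_insert _ (by simp) (Set.toFinite _)] at hm
  linarith


/-- Counting connected components in the point-interval setting: with `T` the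
maximum-total-timestamp spanning tree of the subgraph of edges with timestamp
at most `t₂`, the number of connected components of the subgraph of edges with
timestamps in `[t₁, t₂]` equals `n` minus the number of edges of `T` with
timestamp at least `t₁`. -/
theorem point_interval_count_cc {V : Type*} [Fintype V] (n : ℕ)
    (hcard : Fintype.card V = n)
    (G : SimpleGraph V) (t : Sym2 V → ℝ) (hinj : Set.InjOn t G.edgeSet)
    (t₁ t₂ : ℝ) (ht : t₁ ≤ t₂)
    (hconn : (SimpleGraph.fromEdgeSet {e | e ∈ G.edgeSet ∧ t e ≤ t₂}).Connected)
    (T : SimpleGraph V)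
    (hT : T ≤ SimpleGraph.fromEdgeSet {e | e ∈ G.edgeSet ∧ t e ≤ t₂})
    (hTc : T.Connected) (hTa : T.IsAcyclic)
    (hmax : ∀ T' : SimpleGraph V,
      T' ≤ SimpleGraph.fromEdgeSet {e | e ∈ G.edgeSet ∧ t e ≤ t₂} →
      T'.Connected → T'.IsAcyclic →
      (∑ᶠ e ∈ T'.edgeSet, t e) ≤ ∑ᶠ e ∈ T.edgeSet, t e) :
    Nat.card (SimpleGraph.fromEdgeSet
        {e | e ∈ G.edgeSet ∧ t₁ ≤ t e ∧ t e ≤ t₂}).ConnectedComponent =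
      n - {e | e ∈ T.edgeSet ∧ t₁ ≤ t e}.ncard := by
  classical
  set K := SimpleGraph.fromEdgeSet {e | e ∈ G.edgeSet ∧ t e ≤ t₂} with hK
  set H := SimpleGraph.fromEdgeSet {e | e ∈ G.edgeSet ∧ t₁ ≤ t e ∧ t e ≤ t₂} with hH
  set F := SimpleGraph.fromEdgeSet {e | e ∈ T.edgeSet ∧ t₁ ≤ t e} with hF
  have hFT : F ≤ T := by
    intro x y h
    rw [hF, SimpleGraph.fromEdgeSet_adj] at h
    exact h.1.1
  have hFH : F ≤ H := by
    intro x y h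
    rw [hF, SimpleGraph.fromEdgeSet_adj] at h
    have := hT h.1.1
    rw [hK, SimpleGraph.fromEdgeSet_adj] at this
    rw [hH, SimpleGraph.fromEdgeSet_adj]
    exact ⟨⟨this.1.1, h.1.2, this.1.2⟩, h.2⟩
  have hadj : ∀ u v, H.Adj u v → F.Reachable u v := by
    intro u v h
    rw [hH, SimpleGraph.fromEdgeSet_adj] at h
    by_cases hn : T.Adj u v
    · refine SimpleGraph.Adj.reachable ?_
      rw [hF, SimpleGraph.fromEdgeSet_adj]
      exact ⟨⟨hn, h.1.2.1⟩, h.2⟩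
    · obtain ⟨p, hp⟩ := hTc.exists_isPath u v
      have hk : K.Adj u v := by
        rw [hK, SimpleGraph.fromEdgeSet_adj]
        exact ⟨⟨h.1.1, h.1.2.2⟩, h.2⟩
      refine ⟨p.transfer F fun f hf => ?_⟩
      have h1 := aux_exchange K T t hT hTc hTa hmax hk hn p hp f hf
      have hfT := p.edges_subset_edgeSet hf
      rw [hF, SimpleGraph.edgeSet_fromEdgeSet]
      exact ⟨⟨hfT, h.1.2.1.trans h1⟩, T.not_isDiag_of_mem_edgeSet hfT⟩
  have hreach : ∀ u v, H.Reachable u v → F.Reachable u v := by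
    rintro u v ⟨p⟩
    induction p with
    | nil => exact SimpleGraph.Reachable.refl _
    | cons h p ih => exact (hadj _ _ h).trans ih
  have hcc : Nat.card F.ConnectedComponent = Nat.card H.ConnectedComponent := by
    refine Nat.card_eq_of_bijective
      (fun c => c.map (SimpleGraph.Hom.ofLE hFH)) ⟨fun c d h => ?_, fun c => ?_⟩
    · induction c using SimpleGraph.ConnectedComponent.ind with | _ x =>
      induction d using SimpleGraph.ConnectedComponent.ind with | _ y =>
      exact SimpleGraph.ConnectedComponent.sound
        (hreach _ _ (SimpleGraph.ConnectedComponent.exact h))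
    · induction c using SimpleGraph.ConnectedComponent.ind with | _ x =>
      exact ⟨F.connectedComponentMk x, rfl⟩
  have hFe : F.edgeSet = {e | e ∈ T.edgeSet ∧ t₁ ≤ t e} := by
    rw [hF, SimpleGraph.edgeSet_fromEdgeSet]
    ext e
    exact ⟨fun h => h.1, fun h => ⟨h, T.not_isDiag_of_mem_edgeSet h.1⟩⟩
  have := aux_forest _ F (hTa.anti hFT) rfl
  rw [hFe, hcc, Nat.card_eq_fintype_card (α := V), hcard] at this
  omega
end

section
/- (Interval-point temporal connectivity via incremental MST.) Let V be a finite vertex type, G a simple graph on V, and let each edge e of G carry a time interval [a(e), b(e)] with a(e) ≤ b(e), where b : Sym2 V → ℝ is injective on the edge set of G. Fix a real t. Let G_{a≤t} be the subgraph of G consisting of edges e with a(e) ≤ t, and assume G_{a≤t} is connected. Let T_t be a spanning tree of G_{a≤t} maximizing Σ_{e ∈ edges(T_t)} b(e) among all spanning trees of G_{a≤t} (equivalently, the minimum spanning tree under weight −b). Then for all vertices u and v: u and v are connected in the subgraph G_t of G consisting of the edges e with a(e) ≤ t ≤ b(e) if and only if every edge on the unique path in T_t from u to v has b(e) ≥ t.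 -/
/-- Interval-point temporal connectivity via incremental MST: each edge `e`
carries a time interval `[a e, b e]`; with `T_t` the spanning tree of the
subgraph of edges with `a e ≤ t` maximizing the total end time `Σ b e`, two
vertices are connected by the edges alive at time `t` iff every edge on the
(unique) path between them in `T_t` has end time `b e ≥ t`. -/
theorem interval_point_connectivity {V : Type*} [Fintype V]
    (G : SimpleGraph V) (a b : Sym2 V → ℝ)
    (hab : ∀ e ∈ G.edgeSet, a e ≤ b e) (hinj : Set.InjOn b G.edgeSet)
    (t : ℝ)
    (hconn : (SimpleGraph.fromEdgeSet {e | e ∈ G.edgeSet ∧ a e ≤ t}).Connected)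
    (T : SimpleGraph V)
    (hT : T ≤ SimpleGraph.fromEdgeSet {e | e ∈ G.edgeSet ∧ a e ≤ t})
    (hTc : T.Connected) (hTa : T.IsAcyclic)
    (hmax : ∀ T' : SimpleGraph V,
      T' ≤ SimpleGraph.fromEdgeSet {e | e ∈ G.edgeSet ∧ a e ≤ t} →
      T'.Connected → T'.IsAcyclic →
      (∑ᶠ e ∈ T'.edgeSet, b e) ≤ ∑ᶠ e ∈ T.edgeSet, b e) :
    ∀ u v : V,
      (SimpleGraph.fromEdgeSet
          {e | e ∈ G.edgeSet ∧ a e ≤ t ∧ t ≤ b e}).Reachable u v ↔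
      ∀ p : T.Walk u v, p.IsPath → ∀ e ∈ p.edges, t ≤ b e := by
  classical
  have reach_closed : ∀ (H K : SimpleGraph V), (∀ c d, H.Adj c d → K.Reachable c d) →
      ∀ c d, H.Reachable c d → K.Reachable c d := by
    rintro H K h c d ⟨p⟩
    induction p with
    | nil => exact SimpleGraph.Reachable.refl _
    | cons hadj _ ih => exact (h _ _ hadj).trans ih
  intro u v
  constructor
  · intro huv p hp e he
    by_contra hlt
    push Not at hlt
    induction e using Sym2.ind with
    | _ x y =>
    set F := T.deleteEdges {s(x, y)} with hF
    have hTe : T.Adj x y := p.adj_of_mem_edges he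
    have hFuv : ¬ F.Reachable u v := by
      intro hr
      rw [hF, SimpleGraph.reachable_deleteEdges_iff_exists_walk] at hr
      obtain ⟨q, hq⟩ := hr
      have h1 : p = q.bypass :=
        congrArg Subtype.val (hTa.path_unique ⟨p, hp⟩ ⟨q.bypass, q.bypass_isPath⟩)
      rw [h1] at he
      exact hq (q.edges_bypass_subset he)
    obtain ⟨w, z, hwz, hFwz⟩ : ∃ w z, (SimpleGraph.fromEdgeSet
          {e | e ∈ G.edgeSet ∧ a e ≤ t ∧ t ≤ b e}).Adj w z ∧ ¬ F.Reachable w z := by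
      by_contra hcon
      push Not at hcon
      exact hFuv (reach_closed _ _ hcon _ _ huv)
    have hside : ∀ c, F.Reachable c x ∨ F.Reachable c y := by
      intro c
      obtain ⟨q⟩ := hTc.preconnected c x
      have key : ∀ c d (q : T.Walk c d), (F.Reachable d x ∨ F.Reachable d y) →
          (F.Reachable c x ∨ F.Reachable c y) := by
        intro c d q hd
        induction q with
        | nil => exact hd
        | @cons c d f hadj _ ih =>
          by_cases hcd : s(c, d) = s(x, y)
          · rcases Sym2.eq_iff.1 hcd with ⟨rfl, rfl⟩ | ⟨rfl, rfl⟩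
            · exact Or.inl (SimpleGraph.Reachable.refl _)
            · exact Or.inr (SimpleGraph.Reachable.refl _)
          · have hFcd : F.Adj c d := by
              rw [hF, SimpleGraph.deleteEdges_adj]
              exact ⟨hadj, hcd⟩
            exact (ih hd).imp hFcd.reachable.trans hFcd.reachable.trans
      exact key c x q (Or.inl (SimpleGraph.Reachable.refl _))
    have hne : w ≠ z := hwz.ne
    rw [SimpleGraph.fromEdgeSet_adj] at hwz
    obtain ⟨⟨hGwz, hawz, hbwz⟩, -⟩ := hwz
    set T' := F ⊔ SimpleGraph.edge w z with hT'
    have hFT : F ≤ T := SimpleGraph.deleteEdges_le _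
    have hFT' : F ≤ T' := le_sup_left
    have hwz' : T'.Adj w z := by
      rw [hT', SimpleGraph.sup_adj]
      exact Or.inr (by simp [SimpleGraph.edge_adj, hne])
    have hxy' : T'.Reachable x y := by
      rcases hside w with h1 | h1 <;> rcases hside z with h2 | h2
      · exact absurd (h1.trans h2.symm) hFwz
      · exact ((h1.mono hFT').symm.trans hwz'.reachable).trans (h2.mono hFT')
      · exact ((h2.mono hFT').symm.trans hwz'.reachable.symm).trans (h1.mono hFT')
      · exact absurd (h1.trans h2.symm) hFwz
    have hT'c : T'.Connected := by
      haveI := hTc.nonempty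
      refine ⟨fun c d => reach_closed T T' ?_ c d (hTc.preconnected c d)⟩
      intro c d hcd
      by_cases hh : s(c, d) = s(x, y)
      · rcases Sym2.eq_iff.1 hh with ⟨rfl, rfl⟩ | ⟨rfl, rfl⟩
        · exact hxy'
        · exact hxy'.symm
      · have hFcd : F.Adj c d := by
          rw [hF, SimpleGraph.deleteEdges_adj]
          exact ⟨hcd, hh⟩
        exact hFcd.reachable.mono hFT'
    have hT'a : T'.IsAcyclic := SimpleGraph.IsAcyclic.sup_edge_of_not_reachable hFwz (hTa.anti hFT)
    have hT'le : T' ≤ SimpleGraph.fromEdgeSet {e | e ∈ G.edgeSet ∧ a e ≤ t} := by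
      refine sup_le (hFT.trans hT) ?_
      rw [SimpleGraph.edge_le_iff, SimpleGraph.fromEdgeSet_adj]
      exact Or.inr ⟨⟨hGwz, hawz⟩, hne⟩
    have hsum := hmax T' hT'le hT'c hT'a
    have e1 : T'.edgeSet = insert s(w, z) F.edgeSet := by
      rw [hT', SimpleGraph.edgeSet_sup, SimpleGraph.edge_edgeSet_of_ne hne,
        Set.union_singleton]
    have e2 : T.edgeSet = insert s(x, y) F.edgeSet := by
      rw [hF, SimpleGraph.edgeSet_deleteEdges, Set.insert_diff_singleton,
        Set.insert_eq_of_mem]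
      exact hTe
    have n1 : s(w, z) ∉ F.edgeSet := fun h =>
      hFwz (SimpleGraph.Adj.reachable h)
    have n2 : s(x, y) ∉ F.edgeSet := by
      rw [hF, SimpleGraph.edgeSet_deleteEdges]
      exact fun h => h.2 rfl
    rw [e1, e2, finsum_mem_insert _ n1 (Set.toFinite _),
      finsum_mem_insert _ n2 (Set.toFinite _)] at hsum
    linarith
  · intro h
    obtain ⟨q⟩ := hTc.preconnected u v
    have hq := h q.bypass q.bypass_isPath
    refine ⟨q.bypass.transfer _ ?_⟩
    intro e he
    have h1 := q.bypass.edges_subset_edgeSet he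
    have h2 := SimpleGraph.edgeSet_mono hT h1
    rw [SimpleGraph.edgeSet_fromEdgeSet] at h2 ⊢
    exact ⟨⟨h2.1.1, h2.1.2, hq e he⟩, h2.2⟩
end

section
/- (Sparse certificate for k-edge-connectivity.) Let V be a finite vertex type, G a simple graph on V, and k a positive natural number. Let F₁, …, F_k be subgraphs of G such that for each i, F_i is a maximal spanning forest of the residual graph R_i := G with the edges of F₁, …, F_{i−1} removed; that is, F_i ≤ R_i, F_i is acyclic, and F_i has the same reachability relation as R_i (two vertices are connected in F_i iff they are connected in R_i). Then for all vertices u and v: there exist k pairwise edge-disjoint paths from u to v in G if and only if there exist k pairwise edge-disjoint paths from u to v in the union F₁ ∪ F₂ ∪ ⋯ ∪ F_k. -/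
/-- `kEdgeDisjointPaths H k u v` means there exist `k` pairwise edge-disjoint
paths from `u` to `v` in `H`. -/
def kEdgeDisjointPaths {V : Type*} (H : SimpleGraph V) (k : ℕ) (u v : V) : Prop :=
  ∃ P : Fin k → H.Walk u v,
    (∀ i, (P i).IsPath) ∧
    ∀ i j, i ≠ j → ∀ e ∈ (P i).edges, e ∉ (P j).edges

open Classical in
theorem chi_exists {V : Type*} [Fintype V] {G : SimpleGraph V} {a b : V} (p : G.Walk a b)
    (hp : p.IsPath) : ∃ χ : V → V → ℤ, (∀ x y, χ y x = - χ x y) ∧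
      (∀ x, ∑ y, χ x y = (if x = a then 1 else 0) - (if x = b then 1 else 0)) ∧
      (∀ d ∈ p.darts, χ d.fst d.snd = 1) ∧
      (∀ x y, s(x, y) ∉ p.edges → χ x y = 0) := by
  induction p with
  | nil => exact ⟨fun _ _ => 0, by simp, by simp, by simp, by simp⟩
  | @cons a c b h p ih =>
    rw [SimpleGraph.Walk.cons_isPath_iff] at hp
    obtain ⟨χ, h1, h2, h3, h4⟩ := ih hp.1
    have hac : a ≠ c := h.ne
    have hnot : ∀ y, χ a y = 0 := fun y => h4 _ _ fun he =>
      hp.2 (p.fst_mem_support_of_mem_edges he)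
    have hnot' : ∀ y, χ y a = 0 := fun y => by rw [h1, hnot]; rfl
    refine ⟨fun x y => χ x y + ((if x = a ∧ y = c then 1 else 0)
      - (if x = c ∧ y = a then 1 else 0)), ?_, ?_, ?_, ?_⟩
    · intro x y
      have := h1 x y
      simp only [and_comm (a := y = a), and_comm (a := y = c)]
      linarith
    · intro x
      rw [Finset.sum_add_distrib, h2, Finset.sum_sub_distrib]
      simp only [ite_and]
      by_cases hxa : x = a <;> by_cases hxc : x = c <;> simp [hxa, hxc]
    · intro d hd
      rw [SimpleGraph.Walk.darts_cons, List.mem_cons] at hd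
      rcases hd with rfl | hd
      · simp [hnot, hac]
      · have hda : d.fst ≠ a := fun h => hp.2 (h ▸ p.dart_fst_mem_support_of_mem_darts hd)
        have hdb : d.snd ≠ a := fun h => hp.2 (h ▸ p.dart_snd_mem_support_of_mem_darts hd)
        simp [h3 d hd, hda, hdb]
    · intro x y hxy
      rw [SimpleGraph.Walk.edges_cons, List.mem_cons, not_or] at hxy
      have h5 : ¬ (x = a ∧ y = c) := by rintro ⟨rfl, rfl⟩; exact hxy.1 rfl
      have h6 : ¬ (x = c ∧ y = a) := by rintro ⟨rfl, rfl⟩; exact hxy.1 Sym2.eq_swap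
      simp [h4 x y hxy.2, h5, h6]

theorem edge_dart {V : Type*} {G : SimpleGraph V} {a b : V} (p : G.Walk a b) {x y : V}
    (h : s(x, y) ∈ p.edges) : ∃ d ∈ p.darts, (d.fst = x ∧ d.snd = y) ∨ (d.fst = y ∧ d.snd = x) := by
  rw [SimpleGraph.Walk.edges, List.mem_map] at h
  obtain ⟨d, hd, he⟩ := h
  exact ⟨d, hd, by
    have : s(d.fst, d.snd) = s(x, y) := he
    exact Sym2.eq_iff.1 this⟩

/-- unit-capacity integral flow of value `m` -/
structure UFlow {V : Type*} [Fintype V] (G : SimpleGraph V) (u v : V) (m : ℕ)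
    (f : V → V → ℤ) : Prop where
  anti : ∀ x y, f y x = - f x y
  le : ∀ x y, f x y ≤ 1
  adj : ∀ x y, f x y ≠ 0 → G.Adj x y
  div_u : ∑ y, f u y = m
  div_o : ∀ x, x ≠ u → x ≠ v → ∑ y, f x y = 0

open Classical in
theorem UFlow.cut {V : Type*} [Fintype V] {G : SimpleGraph V} {u v : V} {m : ℕ}
    {f : V → V → ℤ} (hf : UFlow G u v m f) (S : Finset V) (hu : u ∈ S) (hv : v ∉ S) :
    ∑ x ∈ S, ∑ y ∈ Sᶜ, f x y = m := by
  have h1 : ∑ x ∈ S, ∑ y, f x y = m := by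
    rw [Finset.sum_eq_single_of_mem u hu, hf.div_u]
    intro x hx hxu
    exact hf.div_o x hxu (fun h => hv (h ▸ hx))
  have h2 : ∑ x ∈ S, ∑ y ∈ S, f x y = 0 := by
    have : ∑ x ∈ S, ∑ y ∈ S, f x y = - ∑ x ∈ S, ∑ y ∈ S, f x y := by
      conv_lhs => rw [Finset.sum_comm]
      rw [← Finset.sum_neg_distrib]
      refine Finset.sum_congr rfl fun x _ => ?_
      rw [← Finset.sum_neg_distrib]
      exact Finset.sum_congr rfl fun y _ => hf.anti x y
    linarith
  have h3 : ∑ x ∈ S, ∑ y, f x y = ∑ x ∈ S, ∑ y ∈ S, f x y + ∑ x ∈ S, ∑ y ∈ Sᶜ, f x y := by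
    rw [← Finset.sum_add_distrib]
    exact Finset.sum_congr rfl fun x _ => (Finset.sum_add_sum_compl S _).symm
  linarith

/-- Either a path along darts satisfying `r`, or a cut. -/
theorem path_or_cut {V : Type*} [Fintype V] (G : SimpleGraph V) (u v : V) (r : V → V → Prop) :
    (∃ p : G.Walk u v, p.IsPath ∧ ∀ d ∈ p.darts, r d.fst d.snd) ∨
    ∃ S : Finset V, u ∈ S ∧ v ∉ S ∧ ∀ x ∈ S, ∀ y ∉ S, G.Adj x y → ¬ r x y := by
  classical
  by_cases h : ∃ p : G.Walk u v, ∀ d ∈ p.darts, r d.fst d.snd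
  · obtain ⟨p, hp⟩ := h
    exact Or.inl ⟨p.bypass, p.bypass_isPath, fun d hd => hp d (p.darts_bypass_subset_darts hd)⟩
  · right
    refine ⟨Finset.univ.filter fun x => ∃ p : G.Walk u x, ∀ d ∈ p.darts, r d.fst d.snd,
      ?_, ?_, ?_⟩
    · simp only [Finset.mem_filter, Finset.mem_univ, true_and]
      exact ⟨SimpleGraph.Walk.nil, by simp⟩
    · simpa using h
    · intro x hx y hy hxy hr
      simp only [Finset.mem_filter, Finset.mem_univ, true_and] at hx hy
      obtain ⟨p, hp⟩ := hx
      refine hy ⟨p.concat hxy, fun d hd => ?_⟩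
      rw [SimpleGraph.Walk.darts_concat, List.concat_eq_append, List.mem_append,
        List.mem_singleton] at hd
      rcases hd with hd | rfl
      · exact hp d hd
      · exact hr

open Classical in
theorem flow_exists {V : Type*} [Fintype V] (G : SimpleGraph V) (u v : V) (huv : u ≠ v) (k : ℕ)
    (hcut : ∀ S : Finset V, u ∈ S → v ∉ S →
      k ≤ ((S ×ˢ Sᶜ).filter fun q => G.Adj q.1 q.2).card) (m : ℕ) (hm : m ≤ k) :
    ∃ f, UFlow G u v m f := by
  induction m with
  | zero => exact ⟨fun _ _ => 0, by simp, by simp, by simp, by simp, by simp⟩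
  | succ m ih =>
    obtain ⟨f, hf⟩ := ih (by omega)
    rcases path_or_cut G u v (fun x y => f x y ≤ 0) with ⟨p, hp, hd⟩ | ⟨S, hu, hv, hS⟩
    · obtain ⟨χ, h1, h2, h3, h4⟩ := chi_exists p hp
      refine ⟨fun x y => f x y + χ x y, ?_, ?_, ?_, ?_, ?_⟩
      · intro x y
        rw [h1 x y, hf.anti x y]; ring
      · intro x y
        by_cases he : s(x, y) ∈ p.edges
        · obtain ⟨d, hdp, ⟨rfl, rfl⟩ | ⟨rfl, rfl⟩⟩ := edge_dart p he
          · have := hd d hdp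
            have := h3 d hdp
            linarith
          · have := h3 d hdp
            have := h1 d.fst d.snd
            have := hf.le d.snd d.fst
            linarith
        · simpa [h4 x y he] using hf.le x y
      · intro x y hne
        by_cases he : s(x, y) ∈ p.edges
        · exact p.adj_of_mem_edges he
        · exact hf.adj x y (by simpa [h4 x y he] using hne)
      · rw [Finset.sum_add_distrib, hf.div_u, h2]
        simp [huv]
      · intro x hxu hxv
        rw [Finset.sum_add_distrib, hf.div_o x hxu hxv, h2]
        simp [hxu, hxv]
    · exfalso
      have h1 := hf.cut S hu hv
      have h2 := hcut S hu hv
      rw [← Finset.sum_product'] at h1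
      have h3 : ∑ q ∈ S ×ˢ Sᶜ, f q.1 q.2 = ∑ q ∈ S ×ˢ Sᶜ, if G.Adj q.1 q.2 then (1 : ℤ) else 0 := by
        refine Finset.sum_congr rfl fun q hq => ?_
        rw [Finset.mem_product, Finset.mem_compl] at hq
        split_ifs with ha
        · have := hS _ hq.1 _ hq.2 ha
          have := hf.le q.1 q.2
          omega
        · by_contra hne
          exact ha (hf.adj _ _ hne)
      rw [h3, Finset.sum_boole] at h1
      have : ((S ×ˢ Sᶜ).filter fun q => G.Adj q.1 q.2).card = m := by exact_mod_cast h1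
      omega

theorem flow_decomp {V : Type*} [Fintype V] (G : SimpleGraph V) (u v : V) (huv : u ≠ v) (m : ℕ) :
    ∀ f, UFlow G u v m f → ∃ P : Fin m → G.Walk u v, (∀ i, (P i).IsPath) ∧
      (∀ i j, i ≠ j → ∀ e ∈ (P i).edges, e ∉ (P j).edges) ∧
      ∀ i x y, s(x, y) ∈ (P i).edges → f x y ≠ 0 := by
  classical
  induction m with
  | zero => exact fun f _ => ⟨fun i => i.elim0, fun i => i.elim0, fun i => i.elim0, fun i => i.elim0⟩
  | succ m ih =>
    intro f hf
    rcases path_or_cut G u v (fun x y => f x y = 1) with ⟨p, hp, hd⟩ | ⟨S, hu, hv, hS⟩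
    · obtain ⟨χ, h1, h2, h3, h4⟩ := chi_exists p hp
      have hz : ∀ x y, s(x, y) ∈ p.edges → f x y ≠ 0 ∧ f x y - χ x y = 0 := by
        intro x y he
        obtain ⟨d, hdp, ⟨rfl, rfl⟩ | ⟨rfl, rfl⟩⟩ := edge_dart p he
        · have := hd d hdp
          have := h3 d hdp
          omega
        · have := hd d hdp
          have := h3 d hdp
          have := h1 d.fst d.snd
          have := hf.anti d.fst d.snd
          omega
      have hf' : UFlow G u v m (fun x y => f x y - χ x y) := by
        refine ⟨?_, ?_, ?_, ?_, ?_⟩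
        · intro x y
          rw [h1 x y, hf.anti x y]; ring
        · intro x y
          by_cases he : s(x, y) ∈ p.edges
          · simp [(hz x y he).2]
          · simpa [h4 x y he] using hf.le x y
        · intro x y hne
          by_cases he : s(x, y) ∈ p.edges
          · exact p.adj_of_mem_edges he
          · exact hf.adj x y (by simpa [h4 x y he] using hne)
        · rw [Finset.sum_sub_distrib, hf.div_u, h2]
          simp [huv]
        · intro x hxu hxv
          rw [Finset.sum_sub_distrib, hf.div_o x hxu hxv, h2]
          simp [hxu, hxv]
      obtain ⟨P, hP1, hP2, hP3⟩ := ih _ hf'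
      have hdis : ∀ i, ∀ e ∈ (P i).edges, e ∉ p.edges := by
        intro i e
        induction e with | _ x y => exact fun h h' => hP3 i x y h (hz x y h').2
      refine ⟨Fin.cons p P, ?_, ?_, ?_⟩
      · intro i
        refine Fin.cases ?_ (fun i => ?_) i
        · exact hp
        · exact hP1 i
      · intro i j
        refine Fin.cases ?_ (fun i => ?_) i <;> refine Fin.cases ?_ (fun j => ?_) j
        · intro h; exact absurd rfl h
        · intro _ e he he'; exact hdis j e he' he
        · intro _ e he he'; exact hdis i e he he'
        · intro h; exact hP2 i j (fun h' => h (by rw [h']))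
      · intro i x y
        refine Fin.cases ?_ (fun i => ?_) i
        · exact fun h => (hz x y h).1
        · intro h
          by_cases he : s(x, y) ∈ p.edges
          · exact (hz x y he).1
          · have := hP3 i x y h
            simpa [h4 x y he] using this
    · exfalso
      have h1 := hf.cut S hu hv
      have h2 : ∑ x ∈ S, ∑ y ∈ Sᶜ, f x y ≤ 0 := by
        refine Finset.sum_nonpos fun x hx => Finset.sum_nonpos fun y hy => ?_
        rw [Finset.mem_compl] at hy
        by_contra hpos
        have := hf.le x y
        exact hS x hx y hy (hf.adj x y (by omega)) (by omega)
      push_cast at h1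
      omega

open Classical in
theorem inj_cut {V : Type*} [Fintype V] (G : SimpleGraph V) (k : ℕ) (S : Finset V)
    (a b : Fin k → V) (ha : ∀ i, a i ∈ S) (hb : ∀ i, b i ∉ S) (hadj : ∀ i, G.Adj (a i) (b i))
    (hinj : ∀ i j, i ≠ j → s(a i, b i) ≠ s(a j, b j)) :
    k ≤ ((S ×ˢ Sᶜ).filter fun q => G.Adj q.1 q.2).card := by
  have h := Finset.card_le_card_of_injOn (s := (Finset.univ : Finset (Fin k)))
    (t := (S ×ˢ Sᶜ).filter fun q => G.Adj q.1 q.2) (fun i => (a i, b i))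
    (by intro i _; simp [ha, hb, hadj])
    (by
      intro i _ j _ hij
      by_contra hne
      simp only [Prod.mk.injEq] at hij
      exact hinj i j hne (by rw [hij.1, hij.2]))
  simpa using h

theorem k_certificate {V : Type*} [Fintype V] (G : SimpleGraph V)
    (k : ℕ) (hk : 0 < k) (F : Fin k → SimpleGraph V)
    (hsub : ∀ i : Fin k, F i ≤ G.deleteEdges (⋃ j < i, (F j).edgeSet))
    (hacyc : ∀ i : Fin k, (F i).IsAcyclic)
    (hmaximal : ∀ i : Fin k, ∀ u v : V,
      (F i).Reachable u v ↔ (G.deleteEdges (⋃ j < i, (F j).edgeSet)).Reachable u v) :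
    ∀ u v : V, kEdgeDisjointPaths G k u v ↔ kEdgeDisjointPaths (⨆ i, F i) k u v := by
  classical
  intro u v
  have hle : (⨆ i, F i) ≤ G :=
    iSup_le fun i => (hsub i).trans (SimpleGraph.deleteEdges_le _)
  constructor
  · rintro ⟨P, hP1, hP2⟩
    by_cases huv : u = v
    · subst huv
      exact ⟨fun _ => SimpleGraph.Walk.nil, by simp, by simp⟩
    have hcut : ∀ S : Finset V, u ∈ S → v ∉ S →
        k ≤ ((S ×ˢ Sᶜ).filter fun q => (⨆ i, F i).Adj q.1 q.2).card := by
      intro S hu hv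
      by_cases hall : ∀ x ∈ S, ∀ y ∉ S, G.Adj x y → (⨆ i, F i).Adj x y
      · have := fun i => (P i).exists_boundary_dart (S : Set V) (by simpa using hu)
          (by simpa using hv)
        choose d hd h1 h2 using this
        refine inj_cut _ k S (fun i => (d i).fst) (fun i => (d i).snd) h1 h2
          (fun i => hall _ (h1 i) _ (h2 i) (d i).adj) ?_
        intro i j hij he
        refine hP2 i j hij s((d i).fst, (d i).snd) ?_ ?_
        · exact List.mem_map_of_mem (hd i)
        · rw [he]; exact List.mem_map_of_mem (hd j)
      · push Not at hall
        obtain ⟨x, hx, y, hy, hxy, hno⟩ := hall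
        have hr : ∀ i, (F i).Reachable x y := by
          intro i
          rw [hmaximal]
          refine SimpleGraph.Adj.reachable ?_
          rw [SimpleGraph.deleteEdges_adj]
          refine ⟨hxy, fun hm => hno ?_⟩
          simp only [Set.mem_iUnion, SimpleGraph.mem_edgeSet] at hm
          obtain ⟨j, _, hj⟩ := hm
          exact SimpleGraph.iSup_adj.2 ⟨j, hj⟩
        have := fun i => (hr i).some.exists_boundary_dart (S : Set V) (by simpa using hx)
          (by simpa using hy)
        choose d hd h1 h2 using this
        refine inj_cut _ k S (fun i => (d i).fst) (fun i => (d i).snd) h1 h2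
          (fun i => SimpleGraph.iSup_adj.2 ⟨i, (d i).adj⟩) ?_
        have key : ∀ i j, i < j → s((d i).fst, (d i).snd) ≠ s((d j).fst, (d j).snd) := by
          intro i j hij he
          have h := hsub j (d j).adj
          rw [SimpleGraph.deleteEdges_adj] at h
          apply h.2
          simp only [Set.mem_iUnion]
          refine ⟨i, hij, ?_⟩
          rw [← he]
          exact (d i).adj
        intro i j hij
        rcases lt_or_gt_of_ne hij with h | h
        · exact key i j h
        · exact (key j i h).symm
    obtain ⟨f, hf⟩ := flow_exists _ u v huv k hcut k le_rfl
    obtain ⟨Q, hQ1, hQ2, _⟩ := flow_decomp _ u v huv k f hf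
    exact ⟨Q, hQ1, hQ2⟩
  · rintro ⟨P, hP1, hP2⟩
    refine ⟨fun i => (P i).mapLe hle, fun i => ?_, fun i j hij e => ?_⟩
    · exact (hP1 i).mapLe hle
    · simpa using hP2 i j hij e
end
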